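/- arXiv:1610.05617 — 2 statements merged into one kernel-verified Lean document; each statement's English description precedes it below -/
import Mathlib

section
/- Under the BARSS mixture setup described in the context, the ergodic capacity C_erg = Σ_{k=1}^K p_k* ∫₀^∞ E[ log(1 + P_k·H_k·G_k(r)/(N₀ + I_{k,r}/PG)) ]·f_k(r) dr satisfies Σ_{k=1}^K p_k* ∫₀^∞ ( ∫₀^∞ E[V̂_k⁻(H_k,τ,r)] dτ )·f_k(r) dr ≤ C_erg ≤ Σ_{k=1}^K p_k* ∫₀^∞ ( ∫₀^∞ E[V̂_k⁺(H_k,τ,r)] dτ )·f_k(r) dr, where all integrals and expectations are taken in the extended nonnegative reals. -/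
open MeasureTheory ProbabilityTheory
open scoped ProbabilityTheory ENNReal

/-- The standard normal cumulative distribution function. -/
noncomputable def stdNormalCDF (x : ℝ) : ℝ :=
  (Real.sqrt (2 * Real.pi))⁻¹ * ∫ t in Set.Iic x, Real.exp (-(t ^ 2) / 2)

/-- The Berry–Esseen multiplicative function `c(x) = min{0.4785, 31.935/(1+|x|³)}`. -/
noncomputable def berryC (x : ℝ) : ℝ := min 0.4785 (31.935 / (1 + |x| ^ 3))

lemma barss_aux_event {p h g N q i m s e : ℝ} (hp : 0 < p) (hq : 0 < q)
    (hs : 0 < s) (he : 0 < e) (hD : 0 < N + i / q) :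
    e ≤ p * h * g / (N + i / q) ↔
      (i - m) / s ≤ (p * (h * g / e - N / p) * q - m) / s := by
  rw [div_le_div_iff_of_pos_right hs, sub_le_sub_iff_right, le_div_iff₀ hD]
  have h1 : p * (h * g / e - N / p) * q = (p * h * g / e - N) * q := by
    field_simp
  rw [h1, ← div_le_iff₀ hq, le_sub_iff_add_le, le_div_iff₀ he]
  constructor <;> intro h <;> linarith

lemma barss_aux_log {e A : ℝ} (hA : 0 ≤ A) :
    e ≤ Real.log (1 + A) ↔ Real.exp e - 1 ≤ A := by
  rw [Real.le_log_iff_exp_le (by linarith)]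
  constructor <;> intro h <;> linarith

lemma barss_aux_layer {Ω : Type*} [MeasureSpace Ω] [IsProbabilityMeasure (ℙ : Measure Ω)]
    {p g N q m s : ℝ} (hp : 0 < p) (hg : 0 < g) (hq : 0 < q) (hs : 0 < s)
    (H I : Ω → ℝ) (hH : Measurable H) (hI : Measurable I) (hHnn : ∀ ω, 0 ≤ H ω)
    (hind : IndepFun H I ℙ)
    (hpos : ∀ᵐ ω ∂(ℙ : Measure Ω), 0 < N + I ω / q) :
    ∫⁻ ω, ENNReal.ofReal (Real.log (1 + p * H ω * g / (N + I ω / q))) =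
      ∫⁻ τ in Set.Ioi (0 : ℝ), ∫⁻ ω, ℙ {ω' | (I ω' - m) / s ≤
        (p * (H ω * g / (Real.exp τ - 1) - N / p) * q - m) / s} := by
  have hA : ∀ᵐ ω ∂(ℙ : Measure Ω), 0 ≤ p * H ω * g / (N + I ω / q) := by
    filter_upwards [hpos] with ω h
    have := hHnn ω
    positivity
  rw [lintegral_eq_lintegral_meas_le]
  rotate_left
  · filter_upwards [hA] with ω h
    exact Real.log_nonneg (by linarith)
  · exact (by fun_prop : Measurable _).aemeasurable
  refine setLIntegral_congr_fun measurableSet_Ioi fun τ hτ => ?_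
  have he : 0 < Real.exp τ - 1 := by
    have := Real.one_lt_exp_iff.2 hτ
    linarith
  set S : Set (ℝ × ℝ) := {x | (x.2 - m) / s ≤
        (p * (x.1 * g / (Real.exp τ - 1) - N / p) * q - m) / s} with hS
  have hSm : MeasurableSet S := measurableSet_le (by fun_prop) (by fun_prop)
  have h1 : ℙ {ω | τ ≤ Real.log (1 + p * H ω * g / (N + I ω / q))} =
      ℙ ((fun ω => (H ω, I ω)) ⁻¹' S) := by
    apply measure_congr
    filter_upwards [hpos, hA] with ω h h'
    apply propext
    exact (barss_aux_log h').trans (barss_aux_event hp hq hs he h)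
  have h2 := (indepFun_iff_map_prod_eq_prod_map_map hH.aemeasurable hI.aemeasurable).1 hind
  have := Measure.isProbabilityMeasure_map (μ := (ℙ : Measure Ω)) hI.aemeasurable
  refine h1.trans ?_
  rw [← Measure.map_apply (hH.prodMk hI) hSm, h2, Measure.prod_apply hSm,
    lintegral_map (measurable_measure_prodMk_left hSm) hH]
  refine lintegral_congr fun ω => ?_
  rw [Measure.map_apply hI (measurable_prodMk_left hSm)]
  rfl

/-- Theorem 8: bounds on the ergodic capacity under the BARSS association policy
(mixture over tiers and connection distances); all integrals and expectations are
taken in the extended nonnegative reals. -/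
theorem barss_ergodic_capacity_bounds
    {Ω : Type*} [MeasureSpace Ω] [IsProbabilityMeasure (ℙ : Measure Ω)]
    (K : ℕ) (hK : 1 ≤ K)
    (P : Fin K → ℝ) (hP : ∀ k, 0 < P k)
    (G : Fin K → ℝ → ℝ) (hGmeas : ∀ k, Measurable (G k))
    (hGpos : ∀ k, ∀ r : ℝ, 0 ≤ r → 0 < G k r)
    (N₀ PG : ℝ) (hN₀ : 0 ≤ N₀) (hPG : 1 ≤ PG)
    (pstar : Fin K → ℝ) (hpstar : ∀ k, 0 ≤ pstar k) (hpsum : ∑ k, pstar k = 1)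
    (f : Fin K → ℝ → ℝ) (hfmeas : ∀ k, Measurable (f k))
    (hfnn : ∀ k r, 0 ≤ f k r) (hfint : ∀ k, ∫ r in Set.Ici (0 : ℝ), f k r = 1)
    (H : Fin K → Ω → ℝ) (hHmeas : ∀ k, Measurable (H k)) (hHnn : ∀ k ω, 0 ≤ H k ω)
    (I : Fin K → ℝ → Ω → ℝ)
    (hImeas : ∀ k, Measurable (Function.uncurry (I k)))
    (hInn : ∀ k, ∀ r : ℝ, 0 ≤ r → ∀ ω, 0 ≤ I k r ω)
    (hindep : ∀ k, ∀ r : ℝ, 0 ≤ r → IndepFun (H k) (I k r) ℙ)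
    (hI1 : ∀ k, ∀ r : ℝ, 0 ≤ r → Integrable (I k r) ℙ)
    (hI2 : ∀ k, ∀ r : ℝ, 0 ≤ r → Integrable (fun ω => (I k r ω) ^ 2) ℙ)
    (μ σ Ξ : Fin K → ℝ → ℝ)
    (hμmeas : ∀ k, Measurable (μ k)) (hσmeas : ∀ k, Measurable (σ k))
    (hΞmeas : ∀ k, Measurable (Ξ k))
    (hμ : ∀ k, ∀ r : ℝ, 0 ≤ r → μ k r = ∫ ω, I k r ω)
    (hσ : ∀ k, ∀ r : ℝ, 0 ≤ r → (σ k r) ^ 2 = ∫ ω, (I k r ω - μ k r) ^ 2)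
    (hσpos : ∀ k, ∀ r : ℝ, 0 ≤ r → 0 < σ k r)
    (hΞnn : ∀ k, ∀ r : ℝ, 0 ≤ r → 0 ≤ Ξ k r)
    (hpos : ∀ k, ∀ r : ℝ, 0 ≤ r → ∀ᵐ ω ∂(ℙ : Measure Ω), 0 < N₀ + I k r ω / PG)
    (hGauss : ∀ k, ∀ r : ℝ, 0 ≤ r → ∀ x : ℝ,
      |(ℙ {ω | (I k r ω - μ k r) / σ k r ≤ x}).toReal - stdNormalCDF x| ≤
        Ξ k r * berryC x)
    (ζ Vp Vm : Fin K → ℝ → ℝ → ℝ → ℝ)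
    (hζ : ∀ k h τ r, ζ k h τ r =
      (P k * (h * G k r / (Real.exp τ - 1) - N₀ / P k) * PG - μ k r) / σ k r)
    (hVp : ∀ k h τ r, Vp k h τ r =
      if (Real.exp τ - 1) * N₀ / (P k * G k r) ≤ h then
        min 1 (stdNormalCDF (ζ k h τ r) + Ξ k r * berryC (ζ k h τ r)) else 0)
    (hVm : ∀ k h τ r, Vm k h τ r =
      if (Real.exp τ - 1) * N₀ / (P k * G k r) ≤ h then
        max 0 (stdNormalCDF (ζ k h τ r) - Ξ k r * berryC (ζ k h τ r)) else 0)
    (Cerg : ℝ≥0∞)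
    (hCerg : Cerg = ∑ k, ENNReal.ofReal (pstar k) *
      ∫⁻ r in Set.Ici (0 : ℝ),
        (∫⁻ ω, ENNReal.ofReal
            (Real.log (1 + P k * H k ω * G k r / (N₀ + I k r ω / PG)))) *
          ENNReal.ofReal (f k r)) :
    (∑ k, ENNReal.ofReal (pstar k) *
        ∫⁻ r in Set.Ici (0 : ℝ),
          (∫⁻ τ in Set.Ioi (0 : ℝ), ∫⁻ ω, ENNReal.ofReal (Vm k (H k ω) τ r)) *
            ENNReal.ofReal (f k r)) ≤ Cerg ∧
      Cerg ≤ ∑ k, ENNReal.ofReal (pstar k) *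
        ∫⁻ r in Set.Ici (0 : ℝ),
          (∫⁻ τ in Set.Ioi (0 : ℝ), ∫⁻ ω, ENNReal.ofReal (Vp k (H k ω) τ r)) *
            ENNReal.ofReal (f k r) := by
  have key : ∀ k, ∀ r : ℝ, 0 ≤ r → ∀ τ : ℝ, 0 < τ → ∀ h : ℝ,
      ENNReal.ofReal (Vm k h τ r) ≤ ℙ {ω' | (I k r ω' - μ k r) / σ k r ≤ ζ k h τ r} ∧
      ℙ {ω' | (I k r ω' - μ k r) / σ k r ≤ ζ k h τ r} ≤ ENNReal.ofReal (Vp k h τ r) := by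
    intro k r hr τ hτ h
    have hab := abs_le.1 (hGauss k r hr (ζ k h τ r))
    have hne : ℙ {ω' | (I k r ω' - μ k r) / σ k r ≤ ζ k h τ r} ≠ ⊤ := measure_ne_top _ _
    have hle1 : (ℙ {ω' | (I k r ω' - μ k r) / σ k r ≤ ζ k h τ r}).toReal ≤ 1 :=
      ENNReal.toReal_le_of_le_ofReal zero_le_one (by simpa using prob_le_one)
    rw [hVm, hVp]
    split_ifs with hc
    · constructor
      · apply ENNReal.ofReal_le_of_le_toReal
        exact max_le ENNReal.toReal_nonneg (by linarith)
      · rw [ENNReal.le_ofReal_iff_toReal_le hne]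
        · exact le_min hle1 (by linarith)
        · exact ENNReal.toReal_nonneg.trans (le_min hle1 (by linarith))
    · refine ⟨by simp, ?_⟩
      have he : 0 < Real.exp τ - 1 := by
        have := Real.one_lt_exp_iff.2 hτ
        linarith
      have hg := hGpos k r hr
      have hp := hP k
      have : {ω' | (I k r ω' - μ k r) / σ k r ≤ ζ k h τ r} = ∅ := by
        ext ω'
        simp only [Set.mem_ofPred_eq, Set.mem_empty_iff_false, iff_false, hζ]
        rw [div_le_div_iff_of_pos_right (hσpos k r hr), sub_le_sub_iff_right, not_le]
        refine lt_of_lt_of_le ?_ (hInn k r hr ω')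
        refine mul_neg_of_neg_of_pos (mul_neg_of_pos_of_neg hp ?_) (by linarith)
        rw [not_le, lt_div_iff₀ (by positivity)] at hc
        rw [sub_neg, div_lt_div_iff₀ he hp]
        linarith
      rw [this]; simp
  have lay := fun k (r : ℝ) (hr : 0 ≤ r) => barss_aux_layer (m := μ k r) (hP k) (hGpos k r hr)
    (by linarith : 0 < PG) (hσpos k r hr) (H k) (I k r) (hHmeas k)
    ((hImeas k).comp measurable_prodMk_left) (hHnn k) (hindep k r hr) (hpos k r hr)
  simp only [← hζ] at lay
  rw [hCerg]
  constructor
  · refine Finset.sum_le_sum fun k _ => ?_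
    refine mul_le_mul_right ?_ _
    refine setLIntegral_mono' measurableSet_Ici fun r hr => ?_
    rw [lay k r hr]
    refine mul_le_mul_left ?_ _
    exact setLIntegral_mono' measurableSet_Ioi fun τ hτ =>
      lintegral_mono fun ω => (key k r hr τ hτ _).1
  · refine Finset.sum_le_sum fun k _ => ?_
    refine mul_le_mul_right ?_ _
    refine setLIntegral_mono' measurableSet_Ici fun r hr => ?_
    rw [lay k r hr]
    refine mul_le_mul_left ?_ _
    exact setLIntegral_mono' measurableSet_Ioi fun τ hτ =>
      lintegral_mono fun ω => (key k r hr τ hτ _).2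
end

section
/- Under the BARSS mixture setup described in the context, let λ_k > 0 be the tier-k base-station intensity and γ_k ∈ (0,1) the tier-k target outage probability, for k = 1,…,K. Define the conditional tier-k outage probability ρ_k(τ) = ∫₀^∞ P( log(1 + P_k·H_k·G_k(r)/(N₀ + I_{k,r}/PG)) < τ )·f_k(r) dr, the conditional tier-k outage capacity C_o(k,γ_k) = sup{τ ≥ 0 : ρ_k(τ) ≤ γ_k}, the bound functions ρ_k⁺(τ) = 1 − ∫₀^∞ f_k(r)·E[V̂_k⁺(H_k,τ,r)] dr and ρ_k⁻(τ) = 1 − ∫₀^∞ f_k(r)·E[V̂_k⁻(H_k,τ,r)] dr, and the bound capacities C_o⁺(k,γ_k) = sup{τ ≥ 0 : ρ_k⁺(τ) ≤ γ_k} and C_o⁻(k,γ_k) = sup{τ ≥ 0 : ρ_k⁻(τ) ≤ γ_k} (all suprema in [0,∞] with sup ∅ = 0). Then the area spectral efficiency ASE(λ,γ) = Σ_{k=1}^K λ_k·(1 − γ_k)·C_o(k,γ_k) satisfies Σ_{k=1}^K λ_k·(1 − γ_k)·C_o⁻(k,γ_k) ≤ ASE(λ,γ) ≤ Σ_{k=1}^K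 λ_k·(1 − γ_k)·C_o⁺(k,γ_k). -/
open MeasureTheory ProbabilityTheory
open scoped ProbabilityTheory ENNReal

lemma aux_cdf_nonneg (x : ℝ) : 0 ≤ stdNormalCDF x := by
  unfold stdNormalCDF
  have : 0 ≤ ∫ t in Set.Iic x, Real.exp (-(t ^ 2) / 2) :=
    integral_nonneg (fun t => (Real.exp_pos _).le)
  positivity

lemma aux_cdf_meas : Measurable stdNormalCDF := by
  apply Monotone.measurable
  intro x y hxy
  unfold stdNormalCDF
  have hi : Integrable (fun t : ℝ => Real.exp (-(t ^ 2) / 2)) := by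
    have := integrable_exp_neg_mul_sq (b := 1 / 2) (by norm_num)
    refine this.congr (Filter.Eventually.of_forall fun t => ?_)
    simp only
    congr 1; ring
  apply mul_le_mul_of_nonneg_left _ (by positivity)
  apply setIntegral_mono_set hi.integrableOn
  · exact Filter.Eventually.of_forall fun t => (Real.exp_pos _).le
  · exact (Set.Iic_subset_Iic.mpr hxy).eventuallyLE

lemma aux_berry_meas : Measurable berryC := by
  unfold berryC
  fun_prop

lemma aux_berry_nonneg (x : ℝ) : 0 ≤ berryC x := by
  unfold berryC
  apply le_min
  · norm_num
  · positivity

lemma aux_key {Ω : Type*} [MeasureSpace Ω] [IsProbabilityMeasure (ℙ : Measure Ω)]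
    (p g N PG m s τ : ℝ) (hp : 0 < p) (hg : 0 < g) (hPG : 1 ≤ PG) (hs : 0 < s) (hτ : 0 < τ)
    (H I : Ω → ℝ) (hH : Measurable H) (hI : Measurable I) (hHnn : ∀ ω, 0 ≤ H ω)
    (hind : IndepFun H I ℙ) (hpos : ∀ᵐ ω ∂(ℙ : Measure Ω), 0 < N + I ω / PG)
    (z : ℝ → ℝ) (hz : ∀ h, z h = (p * (h * g / (Real.exp τ - 1) - N / p) * PG - m) / s) :
    Measurable (fun ω => (ℙ {ω' | (I ω' - m) / s ≤ z (H ω)}).toReal) ∧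
    (ℙ {ω | Real.log (1 + p * H ω * g / (N + I ω / PG)) < τ}).toReal =
      1 - ∫ ω, (ℙ {ω' | (I ω' - m) / s ≤ z (H ω)}).toReal := by
  have hzm : Measurable z := by
    have : z = fun h => (p * (h * g / (Real.exp τ - 1) - N / p) * PG - m) / s := funext hz
    rw [this]; fun_prop
  have hS : MeasurableSet {q : ℝ × ℝ | (q.2 - m) / s ≤ z q.1} :=
    measurableSet_le (by fun_prop) (by fun_prop)
  have hsec : ∀ h, (ℙ : Measure Ω) {ω' | (I ω' - m) / s ≤ z h} =
      (Measure.map I ℙ) (Prod.mk h ⁻¹' {q : ℝ × ℝ | (q.2 - m) / s ≤ z q.1}) := by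
    intro h
    rw [Measure.map_apply hI (measurable_prodMk_left hS)]
    rfl
  have : IsProbabilityMeasure (Measure.map I ℙ) := Measure.isProbabilityMeasure_map hI.aemeasurable
  have : IsProbabilityMeasure (Measure.map H ℙ) := Measure.isProbabilityMeasure_map hH.aemeasurable
  have hm0 : Measurable (fun h => (Measure.map I ℙ) (Prod.mk h ⁻¹' {q : ℝ × ℝ | (q.2 - m) / s ≤ z q.1})) :=
    measurable_measure_prodMk_left hS
  have hm1 : Measurable (fun ω => (ℙ : Measure Ω) {ω' | (I ω' - m) / s ≤ z (H ω)}) := by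
    simp_rw [hsec]
    exact hm0.comp hH
  refine ⟨hm1.ennreal_toReal, ?_⟩
  have hA : MeasurableSet {ω | (I ω - m) / s ≤ z (H ω)} :=
    measurableSet_le (by fun_prop) (by fun_prop)
  have h1 : (ℙ : Measure Ω) {ω | Real.log (1 + p * H ω * g / (N + I ω / PG)) < τ}
      = ℙ {ω | (I ω - m) / s ≤ z (H ω)}ᶜ := by
    apply measure_congr
    filter_upwards [hpos] with ω hω
    apply propext
    show (Real.log (1 + p * H ω * g / (N + I ω / PG)) < τ) ↔ ¬ ((I ω - m) / s ≤ z (H ω))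
    have he : 0 < Real.exp τ - 1 := by
      have := Real.add_one_lt_exp hτ.ne'
      linarith
    have hPG0 : 0 < PG := by linarith
    have hnn : 0 ≤ p * H ω * g / (N + I ω / PG) := by
      have := hHnn ω
      positivity
    rw [Real.log_lt_iff_lt_exp (by linarith), not_le, hz, div_lt_div_iff_of_pos_right hs]
    have e1 : p * (H ω * g / (Real.exp τ - 1) - N / p) * PG
        = (p * H ω * g / (Real.exp τ - 1) - N) * PG := by
      field_simp
    rw [e1, sub_lt_sub_iff_right, ← lt_div_iff₀ hPG0, sub_lt_iff_lt_add', div_lt_iff₀ he,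
      ← lt_sub_iff_add_lt', div_lt_iff₀ hω, mul_comm (Real.exp τ - 1)]
  have h2 : (ℙ : Measure Ω) {ω | (I ω - m) / s ≤ z (H ω)}
      = ∫⁻ ω, ℙ {ω' | (I ω' - m) / s ≤ z (H ω)} := by
    have e := (indepFun_iff_map_prod_eq_prod_map_map hH.aemeasurable hI.aemeasurable).1 hind
    have : (ℙ : Measure Ω) {ω | (I ω - m) / s ≤ z (H ω)} =
        (Measure.map (fun ω => (H ω, I ω)) ℙ) {q : ℝ × ℝ | (q.2 - m) / s ≤ z q.1} := by
      rw [Measure.map_apply (hH.prodMk hI) hS]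
      rfl
    rw [this, e, Measure.prod_apply hS, lintegral_map hm0 hH]
    simp_rw [hsec]
  rw [h1, prob_compl_eq_one_sub hA, ENNReal.toReal_sub_of_le prob_le_one ENNReal.one_ne_top, h2,
    integral_toReal hm1.aemeasurable (Filter.Eventually.of_forall fun _ => measure_lt_top _ _)]
  simp

lemma aux_bnd (w : ℝ → ℝ) (hw : Measurable w) (f : ℝ → ℝ)
    (hf : Integrable f (volume.restrict (Set.Ici (0 : ℝ))))
    (hb : ∀ r, 0 ≤ r → 0 ≤ w r ∧ w r ≤ 1) :
    Integrable (fun r => f r * w r) (volume.restrict (Set.Ici (0 : ℝ))) := by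
  refine hf.mul_bdd (c := 1) hw.aestronglyMeasurable ?_
  filter_upwards [ae_restrict_mem measurableSet_Ici] with r hr
  rw [Real.norm_eq_abs, abs_of_nonneg (hb r hr).1]
  exact (hb r hr).2

/-- Theorem 9: bounds on the area spectral efficiency `ASE(λ,γ)` under the BARSS
association policy for homogeneous deployments.  The conditional outage
capacities are suprema in `[0,∞]` (i.e. `ℝ≥0∞`) with `sup ∅ = 0`. -/
theorem barss_area_spectral_efficiency_bounds
    {Ω : Type*} [MeasureSpace Ω] [IsProbabilityMeasure (ℙ : Measure Ω)]
    (K : ℕ) (hK : 1 ≤ K)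
    (P : Fin K → ℝ) (hP : ∀ k, 0 < P k)
    (G : Fin K → ℝ → ℝ) (hGmeas : ∀ k, Measurable (G k))
    (hGpos : ∀ k, ∀ r : ℝ, 0 ≤ r → 0 < G k r)
    (N₀ PG : ℝ) (hN₀ : 0 ≤ N₀) (hPG : 1 ≤ PG)
    (pstar : Fin K → ℝ) (hpstar : ∀ k, 0 ≤ pstar k) (hpsum : ∑ k, pstar k = 1)
    (f : Fin K → ℝ → ℝ) (hfmeas : ∀ k, Measurable (f k))
    (hfnn : ∀ k r, 0 ≤ f k r) (hfint : ∀ k, ∫ r in Set.Ici (0 : ℝ), f k r = 1)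
    (H : Fin K → Ω → ℝ) (hHmeas : ∀ k, Measurable (H k)) (hHnn : ∀ k ω, 0 ≤ H k ω)
    (I : Fin K → ℝ → Ω → ℝ)
    (hImeas : ∀ k, Measurable (Function.uncurry (I k)))
    (hInn : ∀ k, ∀ r : ℝ, 0 ≤ r → ∀ ω, 0 ≤ I k r ω)
    (hindep : ∀ k, ∀ r : ℝ, 0 ≤ r → IndepFun (H k) (I k r) ℙ)
    (hI1 : ∀ k, ∀ r : ℝ, 0 ≤ r → Integrable (I k r) ℙ)
    (hI2 : ∀ k, ∀ r : ℝ, 0 ≤ r → Integrable (fun ω => (I k r ω) ^ 2) ℙ)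
    (μ σ Ξ : Fin K → ℝ → ℝ)
    (hμmeas : ∀ k, Measurable (μ k)) (hσmeas : ∀ k, Measurable (σ k))
    (hΞmeas : ∀ k, Measurable (Ξ k))
    (hμ : ∀ k, ∀ r : ℝ, 0 ≤ r → μ k r = ∫ ω, I k r ω)
    (hσ : ∀ k, ∀ r : ℝ, 0 ≤ r → (σ k r) ^ 2 = ∫ ω, (I k r ω - μ k r) ^ 2)
    (hσpos : ∀ k, ∀ r : ℝ, 0 ≤ r → 0 < σ k r)
    (hΞnn : ∀ k, ∀ r : ℝ, 0 ≤ r → 0 ≤ Ξ k r)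
    (hpos : ∀ k, ∀ r : ℝ, 0 ≤ r → ∀ᵐ ω ∂(ℙ : Measure Ω), 0 < N₀ + I k r ω / PG)
    (hGauss : ∀ k, ∀ r : ℝ, 0 ≤ r → ∀ x : ℝ,
      |(ℙ {ω | (I k r ω - μ k r) / σ k r ≤ x}).toReal - stdNormalCDF x| ≤
        Ξ k r * berryC x)
    (ζ Vp Vm : Fin K → ℝ → ℝ → ℝ → ℝ)
    (hζ : ∀ k h τ r, ζ k h τ r =
      (P k * (h * G k r / (Real.exp τ - 1) - N₀ / P k) * PG - μ k r) / σ k r)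
    (hVp : ∀ k h τ r, Vp k h τ r =
      if (Real.exp τ - 1) * N₀ / (P k * G k r) ≤ h then
        min 1 (stdNormalCDF (ζ k h τ r) + Ξ k r * berryC (ζ k h τ r)) else 0)
    (hVm : ∀ k h τ r, Vm k h τ r =
      if (Real.exp τ - 1) * N₀ / (P k * G k r) ≤ h then
        max 0 (stdNormalCDF (ζ k h τ r) - Ξ k r * berryC (ζ k h τ r)) else 0)
    (lam γv : Fin K → ℝ)
    (hlam : ∀ k, 0 < lam k) (hγv : ∀ k, γv k ∈ Set.Ioo (0 : ℝ) 1)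
    (ρ ρp ρm : Fin K → ℝ → ℝ)
    (hρ : ∀ k τ, ρ k τ = ∫ r in Set.Ici (0 : ℝ),
      (ℙ {ω | Real.log (1 + P k * H k ω * G k r / (N₀ + I k r ω / PG)) < τ}).toReal
        * f k r)
    (hρp : ∀ k τ, ρp k τ =
      1 - ∫ r in Set.Ici (0 : ℝ), f k r * ∫ ω, Vp k (H k ω) τ r)
    (hρm : ∀ k τ, ρm k τ =
      1 - ∫ r in Set.Ici (0 : ℝ), f k r * ∫ ω, Vm k (H k ω) τ r)
    (Co Cop Com : Fin K → ℝ≥0∞)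
    (hCo : ∀ k, Co k =
      sSup (ENNReal.ofReal '' {τ : ℝ | 0 ≤ τ ∧ ρ k τ ≤ γv k}))
    (hCop : ∀ k, Cop k =
      sSup (ENNReal.ofReal '' {τ : ℝ | 0 ≤ τ ∧ ρp k τ ≤ γv k}))
    (hCom : ∀ k, Com k =
      sSup (ENNReal.ofReal '' {τ : ℝ | 0 ≤ τ ∧ ρm k τ ≤ γv k}))
    (ASE : ℝ≥0∞)
    (hASE : ASE = ∑ k, ENNReal.ofReal (lam k * (1 - γv k)) * Co k) :
    (∑ k, ENNReal.ofReal (lam k * (1 - γv k)) * Com k) ≤ ASE ∧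
      ASE ≤ ∑ k, ENNReal.ofReal (lam k * (1 - γv k)) * Cop k := by
  have main : ∀ k τ, 0 < τ → ρp k τ ≤ ρ k τ ∧ ρ k τ ≤ ρm k τ := by
    intro k τ hτ
    have hIr : ∀ r, Measurable (I k r) := fun r => (hImeas k).comp measurable_prodMk_left
    have hGk := hGmeas k
    have hμk := hμmeas k
    have hσk := hσmeas k
    have hΞk := hΞmeas k
    have hHk := hHmeas k
    have hIk := hImeas k
    have hcm := aux_cdf_meas
    have hbm := aux_berry_meas
    have he : 0 < Real.exp τ - 1 := by
      have := Real.add_one_lt_exp hτ.ne'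
      linarith
    have hfi : Integrable (f k) (volume.restrict (Set.Ici (0 : ℝ))) := by
      by_contra hc
      have := hfint k
      rw [integral_undef hc] at this
      exact zero_ne_one this
    -- joint measurability
    have hζm : Measurable (fun q : ℝ × Ω => ζ k (H k q.2) τ q.1) := by
      simp_rw [hζ]; fun_prop
    have hcond : MeasurableSet {q : ℝ × Ω |
        (Real.exp τ - 1) * N₀ / (P k * G k q.1) ≤ H k q.2} :=
      measurableSet_le (by fun_prop) (by fun_prop)
    have hVpm : Measurable (fun q : ℝ × Ω => Vp k (H k q.2) τ q.1) := by
      simp_rw [hVp]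
      refine Measurable.ite hcond ?_ measurable_const
      exact measurable_const.min ((hcm.comp hζm).add
        ((hΞk.comp measurable_fst).mul (hbm.comp hζm)))
    have hVmm : Measurable (fun q : ℝ × Ω => Vm k (H k q.2) τ q.1) := by
      simp_rw [hVm]
      refine Measurable.ite hcond ?_ measurable_const
      exact measurable_const.max ((hcm.comp hζm).sub
        ((hΞk.comp measurable_fst).mul (hbm.comp hζm)))
    have hEp : Measurable (fun r => ∫ ω, Vp k (H k ω) τ r) :=
      (hVpm.stronglyMeasurable.integral_prod_right' (ν := (ℙ : Measure Ω))).measurable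
    have hEm : Measurable (fun r => ∫ ω, Vm k (H k ω) τ r) :=
      (hVmm.stronglyMeasurable.integral_prod_right' (ν := (ℙ : Measure Ω))).measurable
    have hpm : Measurable (fun r =>
        (ℙ {ω | Real.log (1 + P k * H k ω * G k r / (N₀ + I k r ω / PG)) < τ}).toReal) := by
      have hS : MeasurableSet {q : ℝ × Ω |
          Real.log (1 + P k * H k q.2 * G k q.1 / (N₀ + Function.uncurry (I k) q / PG)) < τ} :=
        measurableSet_lt (by fun_prop) measurable_const
      exact (measurable_measure_prodMk_left (ν := (ℙ : Measure Ω)) hS).ennreal_toReal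
    -- pointwise bounds
    have hF : ∀ r, 0 ≤ r → ∀ h,
        Vm k h τ r ≤ (ℙ {ω' | (I k r ω' - μ k r) / σ k r ≤ ζ k h τ r}).toReal ∧
        (ℙ {ω' | (I k r ω' - μ k r) / σ k r ≤ ζ k h τ r}).toReal ≤ Vp k h τ r ∧
        0 ≤ Vm k h τ r ∧ Vp k h τ r ≤ 1 := by
      intro r hr h
      have hg := hGauss k r hr (ζ k h τ r)
      rw [abs_le] at hg
      have hle1 : (ℙ {ω' | (I k r ω' - μ k r) / σ k r ≤ ζ k h τ r}).toReal ≤ 1 :=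
        ENNReal.toReal_le_of_le_ofReal zero_le_one (by simpa using prob_le_one)
      have hge0 : 0 ≤ (ℙ {ω' | (I k r ω' - μ k r) / σ k r ≤ ζ k h τ r}).toReal :=
        ENNReal.toReal_nonneg
      rw [hVm, hVp]
      split_ifs with hc
      · refine ⟨max_le hge0 (by linarith), le_min hle1 (by linarith), le_max_left _ _,
          min_le_left _ _⟩
      · refine ⟨hge0, ?_, le_rfl, zero_le_one⟩
        have : {ω' | (I k r ω' - μ k r) / σ k r ≤ ζ k h τ r} = ∅ := by
          ext ω
          simp only [Set.mem_ofPred_eq, Set.mem_empty_iff_false, iff_false, not_le]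
          rw [hζ, div_lt_div_iff_of_pos_right (hσpos k r hr), sub_lt_sub_iff_right]
          refine lt_of_lt_of_le ?_ (hInn k r hr ω)
          rw [not_le, lt_div_iff₀ (mul_pos (hP k) (hGpos k r hr))] at hc
          refine mul_neg_of_neg_of_pos (mul_neg_of_pos_of_neg (hP k) ?_) (by linarith)
          rw [sub_neg, div_lt_div_iff₀ he (hP k)]
          linarith
        rw [this]; simp
    have hVpi : ∀ r, 0 ≤ r → Integrable (fun ω => Vp k (H k ω) τ r) ℙ := by
      intro r hr
      refine Integrable.of_bound (hVpm.comp measurable_prodMk_left).aestronglyMeasurable 1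
        (Filter.Eventually.of_forall fun ω => ?_)
      have := hF r hr (H k ω)
      rw [Real.norm_eq_abs, abs_le]
      constructor <;> linarith
    have hVmi : ∀ r, 0 ≤ r → Integrable (fun ω => Vm k (H k ω) τ r) ℙ := by
      intro r hr
      refine Integrable.of_bound (hVmm.comp measurable_prodMk_left).aestronglyMeasurable 1
        (Filter.Eventually.of_forall fun ω => ?_)
      have := hF r hr (H k ω)
      rw [Real.norm_eq_abs, abs_le]
      constructor <;> linarith
    have hpt : ∀ r, 0 ≤ r → 
        1 - ∫ ω, Vp k (H k ω) τ r ≤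
          (ℙ {ω | Real.log (1 + P k * H k ω * G k r / (N₀ + I k r ω / PG)) < τ}).toReal ∧
        (ℙ {ω | Real.log (1 + P k * H k ω * G k r / (N₀ + I k r ω / PG)) < τ}).toReal ≤
          1 - ∫ ω, Vm k (H k ω) τ r := by
      intro r hr
      obtain ⟨hm, heq⟩ := aux_key (P k) (G k r) N₀ PG (μ k r) (σ k r) τ (hP k) (hGpos k r hr) hPG
        (hσpos k r hr) hτ (H k) (I k r) hHk (hIr r) (hHnn k) (hindep k r hr) (hpos k r hr)
        (fun h => ζ k h τ r) (fun h => hζ k h τ r)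
      have hi : Integrable (fun ω =>
          (ℙ {ω' | (I k r ω' - μ k r) / σ k r ≤ ζ k (H k ω) τ r}).toReal) ℙ := by
        refine Integrable.of_bound hm.aestronglyMeasurable 1
          (Filter.Eventually.of_forall fun ω => ?_)
        have := hF r hr (H k ω)
        rw [Real.norm_eq_abs, abs_le]
        constructor <;> linarith
      rw [heq]
      constructor
      · have := integral_mono hi (hVpi r hr) (fun ω => (hF r hr (H k ω)).2.1)
        linarith
      · have := integral_mono (hVmi r hr) hi (fun ω => (hF r hr (H k ω)).1)
        linarith
    have hWp : ∀ r, 0 ≤ r → 0 ≤ (∫ ω, Vp k (H k ω) τ r) ∧ (∫ ω, Vp k (H k ω) τ r) ≤ 1 := by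
      intro r hr
      constructor
      · refine integral_nonneg fun ω => ?_
        have := hF r hr (H k ω)
        show 0 ≤ Vp k (H k ω) τ r
        linarith
      · have := integral_mono (hVpi r hr) (integrable_const (1 : ℝ))
          (fun ω => (hF r hr (H k ω)).2.2.2)
        simpa using this
    have hWm : ∀ r, 0 ≤ r → 0 ≤ (∫ ω, Vm k (H k ω) τ r) ∧ (∫ ω, Vm k (H k ω) τ r) ≤ 1 := by
      intro r hr
      constructor
      · exact integral_nonneg fun ω => (hF r hr (H k ω)).2.2.1
      · have := hpt r hr
        have h0 : 0 ≤ (ℙ {ω | Real.log (1 + P k * H k ω * G k r / (N₀ + I k r ω / PG)) < τ}).toReal :=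
          ENNReal.toReal_nonneg
        linarith
    have hip := aux_bnd _ hEp (f k) hfi hWp
    have him := aux_bnd _ hEm (f k) hfi hWm
    have hiq := aux_bnd _ hpm (f k) hfi (fun r hr => ⟨ENNReal.toReal_nonneg, by
      have := (hpt r hr).2
      have := (hWm r hr).1
      linarith⟩)
    have e1 := integral_sub hfi hip
    have e2 := integral_sub hfi him
    rw [hfint k] at e1 e2
    rw [hρ, hρp, hρm, ← e1, ← e2]
    simp_rw [mul_comm _ (f k _)]
    constructor
    · refine setIntegral_mono_on (hfi.sub hip) hiq measurableSet_Ici fun r hr => ?_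
      have := mul_le_mul_of_nonneg_left (hpt r hr).1 (hfnn k r)
      linarith
    · refine setIntegral_mono_on hiq (hfi.sub him) measurableSet_Ici fun r hr => ?_
      have := mul_le_mul_of_nonneg_left (hpt r hr).2 (hfnn k r)
      linarith
  have hsup : ∀ (a b : ℝ → ℝ) (c : ℝ), (∀ τ, 0 < τ → b τ ≤ a τ) →
      sSup (ENNReal.ofReal '' {τ : ℝ | 0 ≤ τ ∧ a τ ≤ c}) ≤
        sSup (ENNReal.ofReal '' {τ : ℝ | 0 ≤ τ ∧ b τ ≤ c}) := by
    intro a b c hab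
    apply sSup_le
    rintro _ ⟨τ, ⟨h0, h1⟩, rfl⟩
    rcases h0.eq_or_lt with h | h
    · rw [← h]; simp
    · exact le_sSup ⟨τ, ⟨h0, (hab τ h).trans h1⟩, rfl⟩
  subst hASE
  constructor
  · refine Finset.sum_le_sum fun k _ => mul_le_mul_right ?_ _
    rw [hCom, hCo]
    exact hsup _ _ _ fun τ h => (main k τ h).2
  · refine Finset.sum_le_sum fun k _ => mul_le_mul_right ?_ _
    rw [hCo, hCop]
    exact hsup _ _ _ fun τ h => (main k τ h).1
end
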